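/- arXiv:math/0512580 — 2 statements merged into one kernel-verified Lean document; each statement's English description precedes it below -/
import Mathlib

section
/- For all n ≥ 2, if the Trim number t(n+1) is not prime, then its least prime factor is strictly less than d_T(n) = t(n+1) − t(n). -/
/-- `p i` is the `i`-th prime number (1-indexed): `p 1 = 2`, `p 2 = 3`, ... -/
noncomputable def p (i : ℕ) : ℕ := Nat.nth Nat.Prime (i - 1)

/-- `aT x i` is the unique residue `r` with `0 ≤ r < p i` and `x + r ≡ 0 (mod p i)`. -/
noncomputable def aT (x i : ℕ) : ℕ := (p i - x % p i) % p i

/-- The Trim increment `d_T(n)`, expressed in terms of `t n = x`: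
`d_T(1) = 1` and, for `n ≥ 2`, `d_T(n)` is the smallest positive even integer `d`
with `d ≠ a_T(n, i)` for every `i` with `1 ≤ i ≤ n - 1`. -/
noncomputable def dTaux (n x : ℕ) : ℕ :=
  if n = 1 then 1
  else sInf {d : ℕ | 0 < d ∧ 2 ∣ d ∧ ∀ i, 1 ≤ i → i ≤ n - 1 → d ≠ aT x i}

/-- The Trim numbers: `t 1 = 2` and `t (n+1) = t n + d_T n`. -/
noncomputable def t : ℕ → ℕ
  | 0 => 0
  | 1 => 2
  | (n + 2) => t (n + 1) + dTaux (n + 1) (t (n + 1))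

/-- The Trim increment `d_T(n)`. -/
noncomputable def dT (n : ℕ) : ℕ := dTaux n (t n)

/-!
Pigeonhole among `2, 4, …, 2n` gives `d_T(n) ≤ 2n`, hence `t(n+1) < (n+1)²`, and the least prime
factor `q` of a composite `t(n+1)` satisfies `q ≤ n`. Since the `i`-th prime exceeds `i`, such a `q`
is among the first `n - 1` primes, whose residues `d_T(n)` avoids. If `d_T(n) < q`, then
`q ∣ t(n) + d_T(n)` would make `d_T(n)` the avoided residue; and `d_T(n) = q` is excluded by parity.
-/

theorem minFac_le_of_lt_succ_sq {m n : ℕ} (hm : 0 < m) (hcomp : ¬ m.Prime)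
    (hlt : m < (n + 1) ^ 2) : m.minFac ≤ n :=
  Nat.le_of_lt_succ (lt_of_pow_lt_pow_left₀ 2 n.succ.zero_le
    ((Nat.minFac_sq_le_self hm hcomp).trans_lt hlt))

theorem p_prime (i : ℕ) : (p i).Prime := Nat.prime_nth_prime (i - 1)

theorem lt_p (i : ℕ) : i < p i := by
  have := Nat.add_two_le_nth_prime (i - 1)
  unfold p
  omega

theorem exists_p_eq {q : ℕ} (hq : q.Prime) : ∃ i, 1 ≤ i ∧ p i = q :=
  ⟨Nat.count Nat.Prime q + 1, Nat.le_add_left _ _, Nat.nth_count hq⟩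

theorem aT_lt_p (x i : ℕ) : aT x i < p i := Nat.mod_lt _ (p_prime i).pos

theorem p_dvd_add_aT (x i : ℕ) : p i ∣ x + aT x i := by
  have hle : x % p i ≤ p i := (Nat.mod_lt x (p_prime i).pos).le
  rw [Nat.dvd_iff_mod_eq_zero, aT, Nat.add_mod_mod, ← Nat.mod_add_mod,
    Nat.add_sub_cancel' hle, Nat.mod_self]

theorem aT_eq_iff {x i d : ℕ} : aT x i = d ↔ d < p i ∧ p i ∣ x + d := by
  refine ⟨?_, fun ⟨hlt, hdvd⟩ => ?_⟩
  · rintro rfl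
    exact ⟨aT_lt_p x i, p_dvd_add_aT x i⟩
  · have hmod : x + aT x i ≡ x + d [MOD p i] :=
      (p_dvd_add_aT x i).modEq_zero_nat.trans hdvd.modEq_zero_nat.symm
    exact (hmod.add_left_cancel' x).eq_of_lt_of_lt (aT_lt_p x i) hlt

/-- The increments admissible for the greedy choice of `d_T(n)` at `t(n) = x`: the positive even
numbers different from the residues `a_T(n, i)` for `1 ≤ i ≤ n - 1`. For `n ≥ 2`, `dTaux n x` is the
least of them. -/
def trimSteps (n x : ℕ) : Set ℕ :=
  {d | 0 < d ∧ 2 ∣ d ∧ ∀ i, 1 ≤ i → i ≤ n - 1 → d ≠ aT x i}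

theorem exists_mem_trimSteps_le {n : ℕ} (hn : n ≠ 0) (x : ℕ) : ∃ d ∈ trimSteps n x, d ≤ 2 * n := by
  let residues := (Finset.Icc 1 (n - 1)).image (aT x)
  let evens := (Finset.Icc 1 n).image (2 * ·)
  have hcard : residues.card < evens.card := calc
    residues.card ≤ n - 1 := by simpa using Finset.card_image_le (s := Finset.Icc 1 (n - 1))
    _ < n := by omega
    _ = evens.card := by
      rw [Finset.card_image_of_injective _ (mul_right_injective₀ two_ne_zero), Nat.card_Icc,
        Nat.add_sub_cancel]
  obtain ⟨d, hd, hres⟩ := Finset.exists_mem_notMem_of_card_lt_card hcard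
  obtain ⟨k, hk, rfl⟩ := Finset.mem_image.1 hd
  obtain ⟨hk_pos, hk_le⟩ := Finset.mem_Icc.1 hk
  refine ⟨2 * k, ⟨by omega, dvd_mul_right 2 k, fun i hi hin heq => hres ?_⟩, by omega⟩
  exact Finset.mem_image.2 ⟨i, Finset.mem_Icc.2 ⟨hi, hin⟩, heq.symm⟩

theorem prime_lt_of_mem_trimSteps {n x d q : ℕ} (hd : d ∈ trimSteps n x) (hx : Odd x)
    (hq : q.Prime) (hqn : q ≤ n) (hdvd : q ∣ x + d) : q < d := by
  obtain ⟨-, hd_even, hd_ne⟩ := hd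
  obtain ⟨i, hi, rfl⟩ := exists_p_eq hq
  have hq_odd : Odd (p i) := (hx.add_even (even_iff_two_dvd.2 hd_even)).of_dvd_nat hdvd
  have hne : d ≠ p i := by
    rintro rfl
    exact Nat.not_even_iff_odd.2 hq_odd (even_iff_two_dvd.2 hd_even)
  by_contra! hle
  have hin : i ≤ n - 1 := Nat.le_sub_one_of_lt ((lt_p i).trans_le hqn)
  exact hd_ne i hi hin (aT_eq_iff.2 ⟨hle.lt_of_ne hne, hdvd⟩).symm

theorem dTaux_eq_sInf {n : ℕ} (hn : n ≠ 1) (x : ℕ) : dTaux n x = sInf (trimSteps n x) := if_neg hn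

theorem dT_mem_trimSteps {n : ℕ} (hn : 2 ≤ n) : dT n ∈ trimSteps n (t n) := by
  obtain ⟨d, hd, -⟩ := exists_mem_trimSteps_le (by omega : n ≠ 0) (t n)
  rw [dT, dTaux_eq_sInf (by omega)]
  exact Nat.sInf_mem ⟨d, hd⟩

theorem dT_le_two_mul {n : ℕ} (hn : 2 ≤ n) : dT n ≤ 2 * n := by
  obtain ⟨d, hd, hle⟩ := exists_mem_trimSteps_le (by omega : n ≠ 0) (t n)
  rw [dT, dTaux_eq_sInf (by omega)]
  exact (Nat.sInf_le hd).trans hle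

theorem even_dT {n : ℕ} (hn : 2 ≤ n) : Even (dT n) := even_iff_two_dvd.2 (dT_mem_trimSteps hn).2.1

theorem t_succ {n : ℕ} (hn : n ≠ 0) : t (n + 1) = t n + dT n := by
  obtain ⟨m, rfl⟩ := Nat.exists_eq_succ_of_ne_zero hn
  rfl

theorem t_two : t 2 = 3 := by simp [t, dTaux]

theorem odd_t {n : ℕ} (hn : 2 ≤ n) : Odd (t n) := by
  induction n, hn using Nat.le_induction with
  | base => rw [t_two]; decide
  | succ n hn ih => rw [t_succ (by omega)]; exact ih.add_even (even_dT hn)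

theorem t_lt_sq {n : ℕ} (hn : 2 ≤ n) : t n < n ^ 2 := by
  induction n, hn using Nat.le_induction with
  | base => simp [t_two]
  | succ n hn ih => calc
      t (n + 1) = t n + dT n := t_succ (by omega)
      _ < n ^ 2 + 2 * n := add_lt_add_of_lt_of_le ih (dT_le_two_mul hn)
      _ < (n + 1) ^ 2 := by linarith

/-- For all `n ≥ 2`, if the Trim number `t (n+1)` is not prime, then its least
prime factor is strictly less than `d_T(n) = t (n+1) - t n`. -/
theorem stmt_6 (n : ℕ) (hn : 2 ≤ n) (h : ¬ (t (n + 1)).Prime) :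
    (t (n + 1)).minFac < dT n := by
  have ht : t (n + 1) = t n + dT n := t_succ (by omega)
  have hstep : dT n ∈ trimSteps n (t n) := dT_mem_trimSteps hn
  have hone : 1 < t (n + 1) := by
    have := (odd_t hn).pos
    have := hstep.1
    omega
  have hle : (t (n + 1)).minFac ≤ n :=
    minFac_le_of_lt_succ_sq (by omega) h (t_lt_sq (by omega))
  exact prime_lt_of_mem_trimSteps hstep (odd_t hn) (Nat.minFac_prime hone.ne') hle
    (ht ▸ Nat.minFac_dvd (t (n + 1)))
end

section
/- For all n ≥ 2 and all k ≥ 1, if p(k)² < c(n) ≤ p(k+1)², then the Compact increment satisfies d_c(n) ≤ 2k; that is, c(n+1) − c(n) ≤ 2k. -/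
/-- `aC x i` is the unique residue `r` with `0 ≤ r < p i` and `x + r ≡ 0 (mod p i)`. -/
noncomputable def aC (x i : ℕ) : ℕ := (p i - x % p i) % p i

/-- The Compact increment `d_c(n)`, expressed in terms of `c n = x`:
`d_c(1) = 1` and, for `n ≥ 2`, `d_c(n)` is the smallest positive even integer `d`
with `d ≠ a_c(n, i)` for every `i ≥ 1` with `p i ^ 2 ≤ c n`. -/
noncomputable def dCaux (n x : ℕ) : ℕ :=
  if n = 1 then 1
  else sInf {d : ℕ | 0 < d ∧ 2 ∣ d ∧ ∀ i, 1 ≤ i → p i ^ 2 ≤ x → d ≠ aC x i}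

/-- The Compact numbers: `c 1 = 2` and `c (n+1) = c n + d_c n`. -/
noncomputable def c : ℕ → ℕ
  | 0 => 0
  | 1 => 2
  | (n + 2) => c (n + 1) + dCaux (n + 1) (c (n + 1))

/-- The Compact increment `d_c(n)`. -/
noncomputable def dC (n : ℕ) : ℕ := dCaux n (c n)

/-!
Write `x = c n`. One of the `k` candidates `2, 4, …, 2k` is not excluded: only primes `p i` with
`i ≤ k + 1` matter, and neither end of this range excludes any candidate. The prime `p 1 = 2`
forbids a residue smaller than `2`, and `p (k + 1)` matters only when `x = p (k + 1) ^ 2`, where it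
forbids the residue `0`. The primes `p 2, …, p k` in between exclude at most `k - 1` candidates.
-/

theorem p_one : p 1 = 2 := Nat.nth_prime_zero_eq_two

theorem p_pos (i : ℕ) : 0 < p i := (Nat.prime_nth_prime (i - 1)).pos

theorem p_strictMonoOn : StrictMonoOn p (Set.Ici 1) := fun _ hi _ _ hij =>
  Nat.nth_strictMono Nat.infinite_setOfPred_prime (Nat.sub_lt_sub_right hi hij)

theorem aC_lt_p (x i : ℕ) : aC x i < p i := Nat.mod_lt _ (p_pos i)

theorem aC_eq_zero_of_dvd {x i : ℕ} (h : p i ∣ x) : aC x i = 0 := by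
  rw [aC, Nat.mod_eq_zero_of_dvd h, Nat.sub_zero, Nat.mod_self]

theorem le_succ_of_p_sq_le {x i k : ℕ} (hx : x ≤ p (k + 1) ^ 2) (hi : 1 ≤ i)
    (hix : p i ^ 2 ≤ x) : i ≤ k + 1 := by
  have hp : p i ≤ p (k + 1) := (Nat.pow_le_pow_iff_left two_ne_zero).1 (hix.trans hx)
  exact (p_strictMonoOn.le_iff_le hi k.succ_pos).1 hp

theorem exists_two_mul_ne_aC {k : ℕ} (x : ℕ) (hk : 1 ≤ k) :
    ∃ j ∈ Finset.Icc 1 k, ∀ i ∈ Finset.Icc 2 k, 2 * j ≠ aC x i := by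
  have hcard : ((Finset.Icc 2 k).image (aC x)).card < ((Finset.Icc 1 k).image (2 * ·)).card :=
    calc ((Finset.Icc 2 k).image (aC x)).card
        ≤ (Finset.Icc 2 k).card := Finset.card_image_le
      _ < (Finset.Icc 1 k).card := by simp only [Nat.card_Icc]; lia
      _ = ((Finset.Icc 1 k).image (2 * ·)).card :=
        (Finset.card_image_of_injective _ (mul_right_injective₀ two_ne_zero)).symm
  obtain ⟨d, hd, hd_avoids⟩ := Finset.exists_mem_notMem_of_card_lt_card hcard
  obtain ⟨j, hj, rfl⟩ := Finset.mem_image.1 hd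
  exact ⟨j, hj, fun i hi heq => hd_avoids (Finset.mem_image.2 ⟨i, hi, heq.symm⟩)⟩

theorem exists_even_le_two_mul_ne_aC {k x : ℕ} (hk : 1 ≤ k) (hx : x ≤ p (k + 1) ^ 2) :
    ∃ d ≤ 2 * k, 0 < d ∧ 2 ∣ d ∧ ∀ i, 1 ≤ i → p i ^ 2 ≤ x → d ≠ aC x i := by
  obtain ⟨j, hj, hj_avoids⟩ := exists_two_mul_ne_aC x hk
  obtain ⟨hj_pos, hjk⟩ := Finset.mem_Icc.1 hj
  refine ⟨2 * j, by lia, by lia, dvd_mul_right 2 j, fun i hi hix => ?_⟩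
  obtain rfl | hi_two : i = 1 ∨ 2 ≤ i := by lia
  · have hlt : aC x 1 < 2 := p_one ▸ aC_lt_p x 1
    lia
  obtain hik | rfl : i ≤ k ∨ i = k + 1 := by have := le_succ_of_p_sq_le hx hi hix; lia
  · exact hj_avoids i (Finset.mem_Icc.2 ⟨hi_two, hik⟩)
  · have hx_eq : x = p (k + 1) ^ 2 := hx.antisymm hix
    have hzero : aC x (k + 1) = 0 := aC_eq_zero_of_dvd (hx_eq ▸ dvd_pow_self _ two_ne_zero)
    lia

theorem c_succ {n : ℕ} (hn : 1 ≤ n) : c (n + 1) = c n + dC n := by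
  obtain ⟨m, rfl⟩ := Nat.exists_eq_add_of_le' hn
  rw [c, dC]

theorem stmt_8_general {k x : ℕ} (n : ℕ) (hk : 1 ≤ k) (hx : x ≤ p (k + 1) ^ 2) :
    dCaux n x ≤ 2 * k := by
  rw [dCaux]
  split_ifs
  · lia
  · obtain ⟨d, hdk, hd⟩ := exists_even_le_two_mul_ne_aC hk hx
    exact (Nat.sInf_le hd).trans hdk

/-- For all `n ≥ 2` and `k ≥ 1`, if `p k ^ 2 < c n ≤ p (k+1) ^ 2`, then the
Compact increment satisfies `d_c(n) ≤ 2k`; that is, `c (n+1) - c n ≤ 2k`. -/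
theorem stmt_8 (n k : ℕ) (hn : 2 ≤ n) (hk : 1 ≤ k)
    (h1 : p k ^ 2 < c n) (h2 : c n ≤ p (k + 1) ^ 2) :
    dC n ≤ 2 * k ∧ c (n + 1) - c n ≤ 2 * k := by
  have hd : dC n ≤ 2 * k := stmt_8_general n hk h2
  exact ⟨hd, by rwa [c_succ (by lia), Nat.add_sub_cancel_left]⟩
end
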